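/- arXiv:hep-th/9404042 — 3 statements merged into one kernel-verified Lean document; each statement's English description precedes it below -/
import Mathlib

section
/- Let n, m, n', m', p, q, p', q' be integers and let τ₁₁, τ₁₂, τ₂₂, U₁, U₂, ω, ω', r, s be complex numbers with ω ≠ 0, ω' ≠ 0, r·U₁ ≠ 0 and s·U₂ ≠ 0. Assume the ellipticity relations 2U₁ω = r(n + p'τ₁₁ + q'τ₁₂), 2U₁ω' = r(m + p'τ₁₂ + q'τ₂₂), 2U₂ω = s(n' + pτ₁₁ + qτ₁₂), 2U₂ω' = s(m' + pτ₁₂ + qτ₂₂). Then α·τ₁₁ + β·τ₁₂ + γ·τ₂₂ + δ·(τ₁₂² − τ₁₁τ₂₂) + ε = 0, where α = m'p' − mp, β = np − mq + m'q' − n'p', γ = nq − n'q', δ = pq' − p'q and ε = nm' − mn'. (This is the elimination step in the necessity part of the Main Theorem: the period matrix of a two-gap elliptic potential lies on a Humbert surface.) -/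
/-!
The four ellipticity relations say that the rows of the `2 × 2` matrix `N + Q τ`, with
`N = (n, m; n', m')` and `Q = (p', q'; p, q)`, are both proportional to the period vector `(ω, ω')`.
Hence `det (N + Q τ) = 0`, and for symmetric `τ` expanding this determinant gives the Humbert
relation: the quadratic terms only enter through `det Q * det τ`.
-/

section

open scoped nonZeroDivisors

variable {R : Type*} [CommRing R]

theorem det_eq_zero_of_forall_mul_eq_mul {ι : Type*} [Fintype ι] [DecidableEq ι] [Nontrivial ι]
    {A : Matrix ι ι R} {d u w : ι → R} (hd : ∀ i, d i ∈ R⁰)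
    (hA : ∀ i j, d i * A i j = u i * w j) : A.det = 0 := by
  have rank_one : (Matrix.of fun i j ↦ d i * A i j) = Matrix.vecMulVec u w := Matrix.ext hA
  have prod_mul_det : (∏ i, d i) * A.det = 0 := by
    rw [← Matrix.det_mul_column, rank_one, Matrix.det_vecMulVec]
  exact (mul_left_mem_nonZeroDivisors_eq_zero_iff (prod_mem fun i _ ↦ hd i)).mp prod_mul_det

theorem det_add_mul_symm_fin_two (n m n' m' p q p' q' τ11 τ12 τ22 : R) :
    (!![n, m; n', m'] + !![p', q'; p, q] * !![τ11, τ12; τ12, τ22]).det =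
      (m' * p' - m * p) * τ11 + (n * p - m * q + m' * q' - n' * p') * τ12
        + (n * q - n' * q') * τ22 + (p * q' - p' * q) * (τ12 ^ 2 - τ11 * τ22)
        + (n * m' - m * n') := by
  simp only [Matrix.det_fin_two, Matrix.add_apply, Matrix.mul_apply, Fin.sum_univ_two,
    Matrix.of_apply, Matrix.cons_val]
  ring

theorem humbert_relation_of_elliptic_general
    {n m n' m' p q p' q' τ11 τ12 τ22 u1 u2 ω ω' r s : R} (hr : r ∈ R⁰) (hs : s ∈ R⁰)
    (h1 : u1 * ω = r * (n + p' * τ11 + q' * τ12))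
    (h2 : u1 * ω' = r * (m + p' * τ12 + q' * τ22))
    (h3 : u2 * ω = s * (n' + p * τ11 + q * τ12))
    (h4 : u2 * ω' = s * (m' + p * τ12 + q * τ22)) :
    (m' * p' - m * p) * τ11 + (n * p - m * q + m' * q' - n' * p') * τ12
      + (n * q - n' * q') * τ22 + (p * q' - p' * q) * (τ12 ^ 2 - τ11 * τ22)
      + (n * m' - m * n') = 0 := by
  rw [← det_add_mul_symm_fin_two]
  refine det_eq_zero_of_forall_mul_eq_mul (d := ![r, s]) (u := ![u1, u2]) (w := ![ω, ω'])
    (Fin.forall_fin_two.mpr ⟨hr, hs⟩) fun i j ↦ ?_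
  fin_cases i <;> fin_cases j <;> simp [h1, h2, h3, h4, add_assoc]

end

/-- **Humbert surface relation (elimination step in the necessity part of the Main
Theorem).** If the winding vectors and periods of a two-gap elliptic potential satisfy the
ellipticity relations, then the period matrix `τ` lies on the Humbert surface
`α·τ₁₁ + β·τ₁₂ + γ·τ₂₂ + δ·(τ₁₂² − τ₁₁τ₂₂) + ε = 0` with
`α = m'p' − mp`, `β = np − mq + m'q' − n'p'`, `γ = nq − n'q'`, `δ = pq' − p'q`,
`ε = nm' − mn'`. -/
theorem humbert_relation_of_elliptic
    (n m n' m' p q p' q' : ℤ) (τ11 τ12 τ22 U1 U2 ω ω' r s : ℂ)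
    (hω : ω ≠ 0) (hω' : ω' ≠ 0) (hrU1 : r * U1 ≠ 0) (hsU2 : s * U2 ≠ 0)
    (h1 : 2 * U1 * ω = r * ((n : ℂ) + (p' : ℂ) * τ11 + (q' : ℂ) * τ12))
    (h2 : 2 * U1 * ω' = r * ((m : ℂ) + (p' : ℂ) * τ12 + (q' : ℂ) * τ22))
    (h3 : 2 * U2 * ω = s * ((n' : ℂ) + (p : ℂ) * τ11 + (q : ℂ) * τ12))
    (h4 : 2 * U2 * ω' = s * ((m' : ℂ) + (p : ℂ) * τ12 + (q : ℂ) * τ22)) :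
    ((m' * p' - m * p : ℤ) : ℂ) * τ11
      + ((n * p - m * q + m' * q' - n' * p' : ℤ) : ℂ) * τ12
      + ((n * q - n' * q' : ℤ) : ℂ) * τ22
      + ((p * q' - p' * q : ℤ) : ℂ) * (τ12 ^ 2 - τ11 * τ22)
      + ((n * m' - m * n' : ℤ) : ℂ) = 0 := by
  push_cast
  exact humbert_relation_of_elliptic_general
    (mem_nonZeroDivisors_of_ne_zero (left_ne_zero_of_mul hrU1))
    (mem_nonZeroDivisors_of_ne_zero (left_ne_zero_of_mul hsU2)) h1 h2 h3 h4
end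

section
/- Let N ≥ 1 be an integer, ω, ω' nonzero complex numbers with Im(ω'/ω) > 0, τ̃ a complex number with Im τ̃ > 0, and (α, β) ∈ ℂ². Let τ = (1/N)·((ω'/ω, 1), (1, τ̃)), a symmetric 2×2 matrix with positive definite imaginary part, and define F(x) = θ[0]((x/(2ω) + α, β) | τ), where [0] is the zero characteristic. Then the function f(x) = −2·d²/dx² log F(x) is doubly periodic with periods 2ω and 2ω': for every x at which F(x) ≠ 0, F(x + 2ω) ≠ 0 and F(x + 2ω') ≠ 0, one has f(x + 2ω) = f(x) and f(x + 2ω') = f(x). (This is the periodicity assertion of the paper's Lemma: f is an elliptic function with primitive periods 2ω, 2ω'.) -/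
/-- Genus-2 Riemann theta function with characteristic `[a b; c d]`
(`(a,b) = ε'`, `(c,d) = ε''`), evaluated at `z = (z1, z2)` and period matrix
`τ = ((t11, t12), (t12, t22))`. -/
noncomputable def theta2 (a b c d : ℝ) (z1 z2 t11 t12 t22 : ℂ) : ℂ :=
  ∑' m : ℤ × ℤ,
    Complex.exp
      ((Real.pi : ℂ) * Complex.I *
          (((m.1 : ℂ) + (a : ℂ) / 2) *
              (((m.1 : ℂ) + (a : ℂ) / 2) * t11 + ((m.2 : ℂ) + (b : ℂ) / 2) * t12) +
            ((m.2 : ℂ) + (b : ℂ) / 2) *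
              (((m.1 : ℂ) + (a : ℂ) / 2) * t12 + ((m.2 : ℂ) + (b : ℂ) / 2) * t22)) +
        2 * (Real.pi : ℂ) * Complex.I *
          (((m.1 : ℂ) + (a : ℂ) / 2) * (z1 + (c : ℂ) / 2) +
            ((m.2 : ℂ) + (b : ℂ) / 2) * (z2 + (d : ℂ) / 2)))

/-!
Translating `z` by `k + τ n` with `k, n ∈ ℤ²` multiplies every theta function by the exponential
of an affine function of `z`. Hence along a complex line whose direction `u` satisfies
`p • u ∈ ℤ² + τ ℤ²`, the logarithmic derivative of theta changes by a constant under `x ↦ x + p`,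
and the second logarithmic derivative is `p`-periodic. For `τ = (1/N)·((ω'/ω, 1), (1, τ̃))` the
direction `(1/(2ω), 0)` has two such `p`: `2ω` gives `(1, 0)`, and `2ω'` gives
`(ω'/ω, 0) = N τ e₁ - e₂`.
-/

open Complex

section ExpQuasiPeriod

/-- `p` is a quasi-period of `F` with multiplier the exponential of an affine function, as for
theta and sigma functions. -/
def IsExpQuasiPeriod (F : ℂ → ℂ) (p : ℂ) : Prop :=
  ∃ r s : ℂ, ∀ x, F (x + p) = exp (r + s * x) * F x

variable {F : ℂ → ℂ} {p x : ℂ}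

lemma IsExpQuasiPeriod.ne_zero (h : IsExpQuasiPeriod F p) (hx : F x ≠ 0) : F (x + p) ≠ 0 := by
  obtain ⟨r, s, hrs⟩ := h
  exact hrs x ▸ mul_ne_zero (exp_ne_zero _) hx

lemma logDeriv_cexp_affine (r s x : ℂ) : logDeriv (fun y => exp (r + s * y)) x = s := by
  have hasDerivAt_exp : HasDerivAt (fun y => exp (r + s * y)) (exp (r + s * x) * s) x := by
    simpa using (((hasDerivAt_id x).const_mul s).const_add r).cexp
  rw [logDeriv_apply, hasDerivAt_exp.deriv, mul_div_cancel_left₀ _ (exp_ne_zero _)]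

lemma IsExpQuasiPeriod.exists_logDeriv_add (h : IsExpQuasiPeriod F p)
    (hF : Differentiable ℂ F) :
    ∃ s : ℂ, ∀ x, F x ≠ 0 → logDeriv F (x + p) = s + logDeriv F x := by
  obtain ⟨r, s, hrs⟩ := h
  refine ⟨s, fun x hx => ?_⟩
  calc logDeriv F (x + p) = logDeriv (fun y => F (y + p)) x := by
        simp only [logDeriv_apply, deriv_comp_add_const]
    _ = logDeriv (fun y => exp (r + s * y) * F y) x := by rw [funext hrs]
    _ = logDeriv (fun y => exp (r + s * y)) x + logDeriv F x :=
        logDeriv_mul x (exp_ne_zero _) hx (by fun_prop) (hF x)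
    _ = s + logDeriv F x := by rw [logDeriv_cexp_affine]

lemma IsExpQuasiPeriod.deriv_logDeriv_add (h : IsExpQuasiPeriod F p)
    (hF : Differentiable ℂ F) (hx : F x ≠ 0) :
    deriv (logDeriv F) (x + p) = deriv (logDeriv F) x := by
  obtain ⟨s, hs⟩ := h.exists_logDeriv_add hF
  have logDeriv_add_near : (fun y => logDeriv F (y + p)) =ᶠ[nhds x] fun y => s + logDeriv F y :=
    (hF.continuous.continuousAt.eventually_ne hx).mono hs
  rw [← deriv_comp_add_const, logDeriv_add_near.deriv_eq, deriv_const_add]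

end ExpQuasiPeriod

/-- The witness is `det / trace`, which lies below the smallest eigenvalue. -/
lemma exists_pos_mul_sq_add_sq_le_of_posDef {A B C : ℝ} (hA : 0 < A) (hdet : B ^ 2 < A * C) :
    ∃ δ > 0, ∀ x y : ℝ, δ * (x ^ 2 + y ^ 2) ≤ A * x ^ 2 + 2 * B * (x * y) + C * y ^ 2 := by
  have hC : 0 < C := pos_of_mul_pos_right ((sq_nonneg B).trans_lt hdet) hA.le
  have trace_pos : 0 < A + C := add_pos hA hC
  refine ⟨(A * C - B ^ 2) / (A + C), div_pos (sub_pos.2 hdet) trace_pos, fun x y => ?_⟩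
  rw [div_mul_eq_mul_div, div_le_iff₀ trace_pos]
  have sum_sq_nonneg : 0 ≤ (A * x + B * y) ^ 2 + (B * x + C * y) ^ 2 := by positivity
  linarith

section Theta

variable (a b c d : ℝ) (z₁ z₂ t₁₁ t₁₂ t₂₂ : ℂ)

/-- The summand with index `m` of the series defining `theta2`. -/
noncomputable def theta2Term (m : ℤ × ℤ) : ℂ :=
  exp (Real.pi * I *
      ((m.1 + a / 2) * ((m.1 + a / 2) * t₁₁ + (m.2 + b / 2) * t₁₂) +
        (m.2 + b / 2) * ((m.1 + a / 2) * t₁₂ + (m.2 + b / 2) * t₂₂)) +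
    2 * Real.pi * I * ((m.1 + a / 2) * (z₁ + c / 2) + (m.2 + b / 2) * (z₂ + d / 2)))

lemma theta2_eq_tsum_theta2Term :
    theta2 a b c d z₁ z₂ t₁₁ t₁₂ t₂₂ = ∑' m, theta2Term a b c d z₁ z₂ t₁₁ t₁₂ t₂₂ m :=
  rfl

lemma theta2_add_lattice (k₁ k₂ n₁ n₂ : ℤ) :
    theta2 a b c d (z₁ + (k₁ + (n₁ * t₁₁ + n₂ * t₁₂))) (z₂ + (k₂ + (n₁ * t₁₂ + n₂ * t₂₂)))
        t₁₁ t₁₂ t₂₂ =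
      exp (Real.pi * I * (a * k₁ + b * k₂ - c * n₁ - d * n₂
          - (n₁ ^ 2 * t₁₁ + 2 * n₁ * n₂ * t₁₂ + n₂ ^ 2 * t₂₂) - 2 * (n₁ * z₁ + n₂ * z₂))) *
        theta2 a b c d z₁ z₂ t₁₁ t₁₂ t₂₂ := by
  simp only [theta2_eq_tsum_theta2Term]
  rw [← (Equiv.addRight (n₁, n₂)).tsum_eq (theta2Term a b c d z₁ z₂ t₁₁ t₁₂ t₂₂),
    ← tsum_mul_left]
  refine tsum_congr fun m => ?_
  simp only [theta2Term, ← exp_add, Equiv.coe_addRight, Prod.fst_add, Prod.snd_add]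
  rw [exp_eq_exp_iff_exists_int]
  refine ⟨m.1 * k₁ + m.2 * k₂, ?_⟩
  push_cast
  ring

lemma theta2_eq_exp_mul_theta2_zero :
    theta2 a b c d z₁ z₂ t₁₁ t₁₂ t₂₂ =
      exp (Real.pi * I * ((a ^ 2 * t₁₁ + 2 * a * b * t₁₂ + b ^ 2 * t₂₂) / 4
          + (a * (z₁ + c / 2) + b * (z₂ + d / 2)))) *
        theta2 0 0 0 0 (z₁ + c / 2 + (a * t₁₁ + b * t₁₂) / 2)
          (z₂ + d / 2 + (a * t₁₂ + b * t₂₂) / 2) t₁₁ t₁₂ t₂₂ := by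
  simp only [theta2_eq_tsum_theta2Term]
  rw [← tsum_mul_left]
  refine tsum_congr fun m => ?_
  simp only [theta2Term, ← exp_add, ofReal_zero]
  congr 1
  ring

lemma norm_theta2Term_zero (m : ℤ × ℤ) :
    ‖theta2Term 0 0 0 0 z₁ z₂ t₁₁ t₁₂ t₂₂ m‖ =
      Real.exp (-Real.pi * (t₁₁.im * m.1 ^ 2 + 2 * t₁₂.im * (m.1 * m.2) + t₂₂.im * m.2 ^ 2)
        - 2 * Real.pi * (m.1 * z₁.im + m.2 * z₂.im)) := by
  rw [theta2Term, norm_exp]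
  congr 1
  simp only [ofReal_zero, zero_div, add_zero, add_re, mul_re, ofReal_re, I_re, mul_zero, ofReal_im,
    I_im, mul_one, sub_self, intCast_re, intCast_im, zero_mul, sub_zero, add_im, mul_im, zero_sub,
    re_ofNat, im_ofNat, neg_mul]
  ring

variable {z₁ z₂ t₁₁ t₁₂ t₂₂}

lemma norm_theta2Term_zero_le {δ S T : ℝ}
    (hδ : ∀ x y : ℝ, δ * (x ^ 2 + y ^ 2) ≤
      t₁₁.im * x ^ 2 + 2 * t₁₂.im * (x * y) + t₂₂.im * y ^ 2)
    (hS : |z₁.im| ≤ S) (hT : |z₂.im| ≤ T) (m : ℤ × ℤ) :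
    ‖theta2Term 0 0 0 0 z₁ z₂ t₁₁ t₁₂ t₂₂ m‖ ≤
      Real.exp (-Real.pi * (δ * m.1 ^ 2 - 2 * S * |m.1|)) *
        Real.exp (-Real.pi * (δ * m.2 ^ 2 - 2 * T * |m.2|)) := by
  have neg_mul_le {n : ℤ} {y R : ℝ} (hy : |y| ≤ R) : -(n * y) ≤ R * |n| := by
    calc -(n * y) ≤ |n * y| := neg_le_abs _
      _ = |y| * |n| := by rw [abs_mul, mul_comm, Int.cast_abs]
      _ ≤ R * |n| := by gcongr
  rw [norm_theta2Term_zero, ← Real.exp_add, Real.exp_le_exp]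
  linear_combination Real.pi * hδ m.1 m.2 + 2 * Real.pi * neg_mul_le (n := m.1) hS
    + 2 * Real.pi * neg_mul_le (n := m.2) hT

lemma summable_theta2Term_bound {δ : ℝ} (hδ : 0 < δ) (S T : ℝ) :
    Summable fun m : ℤ × ℤ => Real.exp (-Real.pi * (δ * m.1 ^ 2 - 2 * S * |m.1|)) *
      Real.exp (-Real.pi * (δ * m.2 ^ 2 - 2 * T * |m.2|)) := by
  have summable_factor (R : ℝ) :
      Summable fun n : ℤ => Real.exp (-Real.pi * (δ * n ^ 2 - 2 * R * |n|)) := by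
    simpa using summable_pow_mul_jacobiTheta₂_term_bound R hδ 0
  exact (summable_factor S).mul_of_nonneg (summable_factor T)
    (fun _ => (Real.exp_pos _).le) (fun _ => (Real.exp_pos _).le)

variable {g₁ g₂ : ℂ → ℂ}

lemma differentiable_theta2_zero_comp (ht₁₁ : 0 < t₁₁.im)
    (hdet : t₁₂.im ^ 2 < t₁₁.im * t₂₂.im)
    (hg₁ : Differentiable ℂ g₁) (hg₂ : Differentiable ℂ g₂) :
    Differentiable ℂ fun x => theta2 0 0 0 0 (g₁ x) (g₂ x) t₁₁ t₁₂ t₂₂ := by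
  simp only [theta2_eq_tsum_theta2Term]
  obtain ⟨δ, δ_pos, hδ⟩ := exists_pos_mul_sq_add_sq_le_of_posDef ht₁₁ hdet
  intro x
  let U : Set ℂ := {w | |(g₁ w).im| < |(g₁ x).im| + 1 ∧ |(g₂ w).im| < |(g₂ x).im| + 1}
  have U_open : IsOpen U :=
    (isOpen_lt (continuous_im.comp hg₁.continuous).abs continuous_const).inter
      (isOpen_lt (continuous_im.comp hg₂.continuous).abs continuous_const)
  have x_mem : x ∈ U := ⟨lt_add_one _, lt_add_one _⟩
  refine (differentiableOn_tsum_of_summable_norm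
    (summable_theta2Term_bound δ_pos (|(g₁ x).im| + 1) (|(g₂ x).im| + 1))
    (fun m => ?_) U_open fun m w hw => ?_).differentiableAt (U_open.mem_nhds x_mem)
  · unfold theta2Term
    fun_prop
  · exact norm_theta2Term_zero_le hδ hw.1.le hw.2.le m

lemma differentiable_theta2_comp (ht₁₁ : 0 < t₁₁.im)
    (hdet : t₁₂.im ^ 2 < t₁₁.im * t₂₂.im)
    (hg₁ : Differentiable ℂ g₁) (hg₂ : Differentiable ℂ g₂) :
    Differentiable ℂ fun x => theta2 a b c d (g₁ x) (g₂ x) t₁₁ t₁₂ t₂₂ := by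
  simp only [theta2_eq_exp_mul_theta2_zero a b c d]
  exact Differentiable.mul (by fun_prop)
    (differentiable_theta2_zero_comp ht₁₁ hdet (by fun_prop) (by fun_prop))

variable {a b c d}

lemma isExpQuasiPeriod_theta2_line {p u₁ u₂ : ℂ} {k₁ k₂ n₁ n₂ : ℤ}
    (h₁ : u₁ * p = k₁ + (n₁ * t₁₁ + n₂ * t₁₂)) (h₂ : u₂ * p = k₂ + (n₁ * t₁₂ + n₂ * t₂₂))
    (v₁ v₂ : ℂ) :
    IsExpQuasiPeriod (fun x => theta2 a b c d (u₁ * x + v₁) (u₂ * x + v₂) t₁₁ t₁₂ t₂₂) p := by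
  refine ⟨Real.pi * I * (a * k₁ + b * k₂ - c * n₁ - d * n₂
      - (n₁ ^ 2 * t₁₁ + 2 * n₁ * n₂ * t₁₂ + n₂ ^ 2 * t₂₂) - 2 * (n₁ * v₁ + n₂ * v₂)),
    -(2 * Real.pi * I * (n₁ * u₁ + n₂ * u₂)), fun x => ?_⟩
  have line_add (u v : ℂ) : u * (x + p) + v = u * x + v + u * p := by ring
  simp only [line_add, h₁, h₂, theta2_add_lattice]
  congr 2
  ring

end Theta

theorem elliptic_potential_doubly_periodic_general
    (a b c d : ℝ) (N : ℕ) (hN : 1 ≤ N) (ω ω' : ℂ) (hτ : 0 < (ω' / ω).im)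
    (τ' : ℂ) (hτ' : 0 < τ'.im) (α β : ℂ) :
    let F : ℂ → ℂ := fun x =>
      theta2 a b c d (x / (2 * ω) + α) β ((ω' / ω) / N) (1 / N) (τ' / N)
    let f : ℂ → ℂ := fun x => -2 * deriv (fun y => deriv F y / F y) x
    ∀ x : ℂ, F x ≠ 0 →
      F (x + 2 * ω) ≠ 0 ∧ F (x + 2 * ω') ≠ 0 ∧
        f (x + 2 * ω) = f x ∧ f (x + 2 * ω') = f x := by
  intro F f x hx
  have hω : ω ≠ 0 := by rintro rfl; simp at hτ
  have hN₀ : (N : ℂ) ≠ 0 := Nat.cast_ne_zero.2 (Nat.one_le_iff_ne_zero.1 hN)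
  have F_differentiable : Differentiable ℂ F := by
    have im_div_pos {t : ℂ} (ht : 0 < t.im) : 0 < (t / N).im := by
      rw [div_natCast_im]
      exact div_pos ht (Nat.cast_pos.2 hN)
    refine differentiable_theta2_comp a b c d (im_div_pos hτ) ?_ (by fun_prop) (by fun_prop)
    simpa [div_natCast_im] using mul_pos (im_div_pos hτ) (im_div_pos hτ')
  have F_eq_line : F = fun x =>
      theta2 a b c d ((2 * ω)⁻¹ * x + α) (0 * x + β) ((ω' / ω) / N) (1 / N) (τ' / N) := by
    simp only [F, div_eq_inv_mul, zero_mul, zero_add]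
  have quasiPeriod_ω : IsExpQuasiPeriod F (2 * ω) := F_eq_line ▸
    isExpQuasiPeriod_theta2_line (k₁ := 1) (k₂ := 0) (n₁ := 0) (n₂ := 0)
      (by field_simp; simp) (by simp) α β
  have quasiPeriod_ω' : IsExpQuasiPeriod F (2 * ω') := F_eq_line ▸
    isExpQuasiPeriod_theta2_line (k₁ := 0) (k₂ := -1) (n₁ := N) (n₂ := 0)
      (by push_cast; field_simp; simp) (by push_cast; field_simp; simp) α β
  exact ⟨quasiPeriod_ω.ne_zero hx, quasiPeriod_ω'.ne_zero hx,
    congrArg (-2 * ·) (quasiPeriod_ω.deriv_logDeriv_add F_differentiable hx),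
    congrArg (-2 * ·) (quasiPeriod_ω'.deriv_logDeriv_add F_differentiable hx)⟩

/-- **Periodicity assertion of the Lemma.** For `τ = (1/N)·((ω'/ω, 1), (1, τ̃))` and
`F(x) = θ[0]((x/(2ω) + α, β) | τ)`, the function `f(x) = −2 (log F)''(x)` is doubly
periodic with periods `2ω` and `2ω'`: wherever `F(x) ≠ 0`, also `F(x + 2ω) ≠ 0` and
`F(x + 2ω') ≠ 0`, and `f(x + 2ω) = f(x)`, `f(x + 2ω') = f(x)`. -/
theorem elliptic_potential_doubly_periodic
    (N : ℕ) (hN : 1 ≤ N) (ω ω' : ℂ) (hω : ω ≠ 0) (hω' : ω' ≠ 0)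
    (hτ : 0 < (ω' / ω).im) (τ' : ℂ) (hτ' : 0 < τ'.im) (α β : ℂ) :
    let F : ℂ → ℂ := fun x =>
      theta2 0 0 0 0 (x / (2 * ω) + α) β ((ω' / ω) / N) (1 / N) (τ' / N)
    let f : ℂ → ℂ := fun x => -2 * deriv (fun y => deriv F y / F y) x
    ∀ x : ℂ, F x ≠ 0 →
      F (x + 2 * ω) ≠ 0 ∧ F (x + 2 * ω') ≠ 0 ∧
        f (x + 2 * ω) = f x ∧ f (x + 2 * ω') = f x :=
  elliptic_potential_doubly_periodic_general 0 0 0 0 N hN ω ω' hτ τ' hτ' α β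
end

section
/- Let τ be a symmetric 2×2 complex matrix with positive definite imaginary part, z ∈ ℂ², and write θ̂[ε](z) := θ[ε](z|2τ). Then the following four duplication identities hold: θ[00;00](0|τ)·θ[00;00](z|τ) = θ̂[00;00](z)² + θ̂[11;00](z)² + θ̂[10;00](z)² + θ̂[01;00](z)²; θ[00;11](0|τ)·θ[00;11](z|τ) = θ̂[00;00](z)² + θ̂[11;00](z)² − θ̂[10;00](z)² − θ̂[01;00](z)²; θ[00;10](0|τ)·θ[00;10](z|τ) = θ̂[00;00](z)² − θ̂[11;00](z)² − θ̂[10;00](z)² + θ̂[01;00](z)²; θ[00;01](0|τ)·θ[00;01](z|τ) = θ̂[00;00](z)² − θ̂[11;00](z)² + θ̂[10;00](z)² − θ̂[01;00](z)². -/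
/-- The symmetric matrix `τ = ((t11, t12), (t12, t22))` has positive definite
imaginary part. -/
def posDefIm (t11 t12 t22 : ℂ) : Prop :=
  (!![t11.im, t12.im; t12.im, t22.im]).PosDef

/-!
Multiplying out `θ[a;c](u|τ) θ[b;d](v|τ)` gives a sum over pairs of lattice vectors `(m, n)`.
Writing `m = p - q` and `n = p + q + e` with `e` a vector of bits recording the parity of `n - m`,
the parallelogram law for the quadratic form `x ↦ ⟨x, τ x⟩` decouples `p` from `q`, at the cost of
replacing `τ` by `2τ` and shifting both by `e / 2`. This is the addition theorem, in any genus. At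
`u = 0` with equal integral characteristics the two factors agree up to the sign `(-1)^⟨e, c⟩`.
-/

open Complex Matrix Real

theorem summable_prod_apply {ι : Type*} [Fintype ι] {κ : ι → Type*} {f : ∀ i, κ i → ℝ}
    (hf_nonneg : ∀ i, 0 ≤ f i) (hf : ∀ i, Summable (f i)) :
    Summable fun x : ∀ i, κ i => ∏ i, f i (x i) := by
  classical
  have hprod_nonneg : 0 ≤ fun x : ∀ i, κ i => ∏ i, f i (x i) :=
    fun x => Finset.prod_nonneg fun i _ => hf_nonneg i (x i)
  refine summable_of_sum_le (c := ∏ i, ∑' j, f i j) hprod_nonneg fun s => ?_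
  let box : ∀ i, Finset (κ i) := fun i => s.image (· i)
  have hs_box : s ⊆ Fintype.piFinset box := fun x hx =>
    Fintype.mem_piFinset.2 fun i => Finset.mem_image_of_mem (· i) hx
  calc ∑ x ∈ s, ∏ i, f i (x i)
      ≤ ∑ x ∈ Fintype.piFinset box, ∏ i, f i (x i) :=
        Finset.sum_le_sum_of_subset_of_nonneg hs_box fun x _ _ => hprod_nonneg x
    _ = ∏ i, ∑ j ∈ box i, f i j := (Finset.prod_univ_sum box f).symm
    _ ≤ ∏ i, ∑' j, f i j := Finset.prod_le_prod
        (fun i _ => Finset.sum_nonneg fun j _ => hf_nonneg i j)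
        (fun i _ => (hf i).sum_le_tsum _ fun j _ => hf_nonneg i j)

theorem summable_exp_neg_quadratic_int {δ : ℝ} (hδ : 0 < δ) (s y : ℝ) :
    Summable fun n : ℤ => Real.exp (-π * (δ * (n + s) ^ 2) - 2 * π * ((n + s) * y)) := by
  have hjacobi : Summable (jacobiTheta₂_term · (I * (δ * s + y : ℝ)) (I * δ)) :=
    (summable_jacobiTheta₂_term_iff _ _).2 (by simpa using hδ)
  refine (hjacobi.norm.mul_left (Real.exp (-π * (δ * s ^ 2) - 2 * π * (s * y)))).congr fun n => ?_
  rw [norm_jacobiTheta₂_term, ← Real.exp_add]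
  congr 1
  simp only [mul_im, I_re, I_im, ofReal_re, ofReal_im, zero_mul, one_mul, zero_add]
  ring

theorem posDef_map_im_two_smul {ι : Type*} {τ : Matrix ι ι ℂ} (hτ : (τ.map im).PosDef) :
    (((2 : ℂ) • τ).map im).PosDef := by
  have hmap : ((2 : ℂ) • τ).map im = (2 : ℝ) • τ.map im := by ext; simp
  exact hmap ▸ hτ.smul two_pos

section Genus

variable {ι : Type*} [Fintype ι]

open scoped MatrixOrder in
theorem exists_pos_mul_dotProduct_self_le {A : Matrix ι ι ℝ} (hA : A.PosDef) :
    ∃ δ > 0, ∀ x : ι → ℝ, δ * (x ⬝ᵥ x) ≤ x ⬝ᵥ A *ᵥ x := by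
  classical
  rcases isEmpty_or_nonempty ι with _ | _
  · exact ⟨1, one_pos, fun x => by simp [Subsingleton.elim x 0]⟩
  obtain ⟨δ, hδ, hle⟩ := (CFC.exists_pos_algebraMap_le_iff hA.isHermitian).2
    fun _ hx => hA.isStrictlyPositive.spectrum_pos hx
  refine ⟨δ, hδ, fun x => ?_⟩
  have hnonneg : 0 ≤ x ⬝ᵥ (A - algebraMap ℝ _ δ) *ᵥ x :=
    (Matrix.le_iff.1 hle).dotProduct_mulVec_nonneg x
  rwa [Algebra.algebraMap_eq_smul_one, sub_mulVec, smul_mulVec, one_mulVec, dotProduct_sub,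
    dotProduct_smul, smul_eq_mul, sub_nonneg] at hnonneg

/-- The exponential `exp (πi ⟨x, τ x⟩ + 2πi ⟨x, w⟩)`, whose values at the points of a translate
of `ℤ^ι` are the terms of a theta series. -/
noncomputable def thetaExp (τ : Matrix ι ι ℂ) (w : ι → ℂ) (x : ι → ℝ) : ℂ :=
  Complex.exp (π * I * ((ofReal ∘ x) ⬝ᵥ τ *ᵥ (ofReal ∘ x)) + 2 * π * I * ((ofReal ∘ x) ⬝ᵥ w))

/-- The Riemann theta function `θ[a; c](z|τ)` with real characteristic `[a; c]`, in genus
`Fintype.card ι`. -/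
noncomputable def riemannTheta (a c : ι → ℝ) (z : ι → ℂ) (τ : Matrix ι ι ℂ) : ℂ :=
  ∑' m : ι → ℤ, thetaExp τ (fun i => z i + c i / 2) (fun i => m i + a i / 2)

theorem norm_thetaExp (τ : Matrix ι ι ℂ) (w : ι → ℂ) (x : ι → ℝ) :
    ‖thetaExp τ w x‖ =
      Real.exp (-π * (x ⬝ᵥ τ.map im *ᵥ x) - 2 * π * (x ⬝ᵥ fun i => (w i).im)) := by
  have hquadratic : ((ofReal ∘ x) ⬝ᵥ τ *ᵥ (ofReal ∘ x)).im = x ⬝ᵥ τ.map im *ᵥ x := by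
    simp [dotProduct, mulVec]
  have hlinear : ((ofReal ∘ x) ⬝ᵥ w).im = x ⬝ᵥ fun i => (w i).im := by
    simp [dotProduct]
  rw [thetaExp, Complex.norm_exp, ← hquadratic, ← hlinear]
  congr 1
  simp only [add_re, mul_re, mul_im, ofReal_re, ofReal_im, I_re, I_im, re_ofNat, im_ofNat, mul_zero,
    zero_mul, mul_one, add_zero, sub_zero, zero_sub, sub_self, neg_mul]
  ring

theorem summable_norm_thetaExp {τ : Matrix ι ι ℂ} (hτ : (τ.map im).PosDef) (w : ι → ℂ)
    (s : ι → ℝ) : Summable fun m : ι → ℤ => ‖thetaExp τ w (fun i => m i + s i)‖ := by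
  obtain ⟨δ, hδ, hcoercive⟩ := exists_pos_mul_dotProduct_self_le hτ
  have hgaussian := summable_prod_apply (fun _ _ => (Real.exp_pos _).le)
    fun i => summable_exp_neg_quadratic_int hδ (s i) (w i).im
  refine hgaussian.of_nonneg_of_le (fun _ => norm_nonneg _) fun m => ?_
  set x : ι → ℝ := fun i => m i + s i
  calc ‖thetaExp τ w x‖
      = Real.exp (-π * (x ⬝ᵥ τ.map im *ᵥ x) - 2 * π * (x ⬝ᵥ fun i => (w i).im)) :=
        norm_thetaExp τ w x
    _ ≤ Real.exp (-π * (δ * (x ⬝ᵥ x)) - 2 * π * (x ⬝ᵥ fun i => (w i).im)) := by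
        have := mul_le_mul_of_nonneg_left (hcoercive x) pi_pos.le
        gcongr Real.exp ?_
        linarith
    _ = ∏ i, Real.exp (-π * (δ * x i ^ 2) - 2 * π * (x i * (w i).im)) := by
        simp only [← Real.exp_sum, dotProduct, Finset.mul_sum, Finset.sum_sub_distrib, sq]

theorem thetaExp_sub_mul_thetaExp_add (τ : Matrix ι ι ℂ) (u v : ι → ℂ) (x y : ι → ℝ) :
    thetaExp τ u (x - y) * thetaExp τ v (x + y) =
      thetaExp ((2 : ℂ) • τ) (u + v) x * thetaExp ((2 : ℂ) • τ) (v - u) y := by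
  have hsub : ofReal ∘ (x - y) = ofReal ∘ x - ofReal ∘ y := by ext; simp
  have hadd : ofReal ∘ (x + y) = ofReal ∘ x + ofReal ∘ y := by ext; simp
  simp only [thetaExp, ← Complex.exp_add, hsub, hadd]
  congr 1
  simp only [mulVec_add, mulVec_sub, dotProduct_add, dotProduct_sub, add_dotProduct,
    sub_dotProduct, smul_mulVec, dotProduct_smul, smul_eq_mul]
  ring

theorem thetaExp_add_right (τ : Matrix ι ι ℂ) (w w' : ι → ℂ) (x : ι → ℝ) :
    thetaExp τ (w + w') x = Complex.exp (2 * π * I * ((ofReal ∘ x) ⬝ᵥ w')) * thetaExp τ w x := by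
  rw [thetaExp, thetaExp, ← Complex.exp_add, dotProduct_add]
  congr 1
  ring

theorem riemannTheta_add_two_mul_int (a c : ι → ℝ) (k : ι → ℤ) (z : ι → ℂ) (τ : Matrix ι ι ℂ) :
    riemannTheta a (fun i => c i + 2 * k i) z τ =
      Complex.exp (π * I * ∑ i, (a i * k i : ℂ)) * riemannTheta a c z τ := by
  simp only [riemannTheta]
  rw [← tsum_mul_left]
  refine tsum_congr fun m => ?_
  have hw : (fun i => z i + ((c i + 2 * k i : ℝ) : ℂ) / 2) =
      (fun i => z i + c i / 2) + fun i => (k i : ℂ) := by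
    ext i
    push_cast [Pi.add_apply]
    ring
  rw [hw, thetaExp_add_right]
  congr 1
  rw [Complex.exp_eq_exp_iff_exists_int]
  refine ⟨∑ i, m i * k i, ?_⟩
  simp only [dotProduct, Function.comp_apply]
  push_cast
  simp only [Finset.mul_sum, Finset.sum_mul, ← Finset.sum_add_distrib]
  exact Finset.sum_congr rfl fun i _ => by ring

/-- The change of variables `(e, p, q) ↦ (p - q, p + q + e)` parametrizing pairs of integer
vectors, where `e` is the vector of parities of the differences of their coordinates. -/
def parityEquiv (ι : Type*) :
    (ι → Fin 2) × (ι → ℤ) × (ι → ℤ) ≃ (ι → ℤ) × (ι → ℤ) where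
  toFun x := (fun i => x.2.1 i - x.2.2 i, fun i => x.2.1 i + x.2.2 i + (x.1 i : ℕ))
  invFun y := (fun i => ⟨((y.2 i - y.1 i) % 2).toNat, by omega⟩,
    fun i => y.1 i + (y.2 i - y.1 i) / 2, fun i => (y.2 i - y.1 i) / 2)
  left_inv x := by
    ext i <;> simp only <;> omega
  right_inv y := by
    ext i <;> simp only <;> omega

theorem thetaExp_parityEquiv (a b : ι → ℝ) (u v : ι → ℂ) (τ : Matrix ι ι ℂ)
    (e : ι → Fin 2) (p q : ι → ℤ) :
    thetaExp τ u (fun i => (parityEquiv ι (e, p, q)).1 i + a i / 2) *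
        thetaExp τ v (fun i => (parityEquiv ι (e, p, q)).2 i + b i / 2) =
      thetaExp ((2 : ℂ) • τ) (u + v) (fun i => p i + ((a i + b i) / 2 + (e i : ℕ)) / 2) *
        thetaExp ((2 : ℂ) • τ) (v - u) (fun i => q i + ((b i - a i) / 2 + (e i : ℕ)) / 2) := by
  rw [← thetaExp_sub_mul_thetaExp_add]
  congr 2 <;> ext i <;>
    simp only [parityEquiv, Equiv.coe_fn_mk, Pi.add_apply, Pi.sub_apply] <;> push_cast <;> ring

theorem tsum_thetaExp_mul_tsum_thetaExp [DecidableEq ι] {τ : Matrix ι ι ℂ}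
    (hτ : (τ.map im).PosDef) (a b : ι → ℝ) (u v : ι → ℂ) :
    (∑' m : ι → ℤ, thetaExp τ u (fun i => m i + a i / 2)) *
        ∑' n : ι → ℤ, thetaExp τ v (fun i => n i + b i / 2) =
      ∑ e : ι → Fin 2,
        (∑' p : ι → ℤ,
            thetaExp ((2 : ℂ) • τ) (u + v) (fun i => p i + ((a i + b i) / 2 + (e i : ℕ)) / 2)) *
          ∑' q : ι → ℤ,
            thetaExp ((2 : ℂ) • τ) (v - u) (fun i => q i + ((b i - a i) / 2 + (e i : ℕ)) / 2) := by
  have hu := summable_norm_thetaExp hτ u fun i => a i / 2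
  have hv := summable_norm_thetaExp hτ v fun i => b i / 2
  have hsum_two := summable_norm_thetaExp (posDef_map_im_two_smul hτ)
  let F : (ι → ℤ) × (ι → ℤ) → ℂ := fun x =>
    thetaExp τ u (fun i => x.1 i + a i / 2) * thetaExp τ v (fun i => x.2 i + b i / 2)
  have hF : Summable fun x => F (parityEquiv ι x) :=
    (parityEquiv ι).summable_iff.2 (summable_mul_of_summable_norm hu hv)
  rw [tsum_mul_tsum_of_summable_norm hu hv, ← (parityEquiv ι).tsum_eq, hF.tsum_prod, tsum_fintype]
  refine Finset.sum_congr rfl fun e _ => ?_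
  rw [tsum_mul_tsum_of_summable_norm (hsum_two _ _) (hsum_two _ _)]
  exact tsum_congr fun x => thetaExp_parityEquiv a b u v τ e x.1 x.2

theorem riemannTheta_mul_riemannTheta [DecidableEq ι] {τ : Matrix ι ι ℂ} (hτ : (τ.map im).PosDef)
    (a b c d : ι → ℝ) (u v : ι → ℂ) :
    riemannTheta a c u τ * riemannTheta b d v τ =
      ∑ e : ι → Fin 2,
        riemannTheta (fun i => (a i + b i) / 2 + (e i : ℕ)) (c + d) (u + v) ((2 : ℂ) • τ) *
          riemannTheta (fun i => (b i - a i) / 2 + (e i : ℕ)) (d - c) (v - u) ((2 : ℂ) • τ) := by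
  have hadd : (fun i => (u + v) i + ((c + d) i : ℝ) / 2) =
      (fun i => u i + (c i : ℂ) / 2) + fun i => v i + (d i : ℂ) / 2 := by
    ext i
    simp only [Pi.add_apply, ofReal_add]
    ring
  have hsub : (fun i => (v - u) i + ((d - c) i : ℝ) / 2) =
      (fun i => v i + (d i : ℂ) / 2) - fun i => u i + (c i : ℂ) / 2 := by
    ext i
    simp only [Pi.sub_apply, ofReal_sub]
    ring
  simp only [riemannTheta, hadd, hsub]
  exact tsum_thetaExp_mul_tsum_thetaExp hτ a b _ _

theorem theta_duplication_diagonal_general [DecidableEq ι] {τ : Matrix ι ι ℂ}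
    (hτ : (τ.map im).PosDef) (c : ι → ℤ) (z : ι → ℂ) :
    riemannTheta 0 (fun i => c i) 0 τ * riemannTheta 0 (fun i => c i) z τ =
      ∑ e : ι → Fin 2, (-1) ^ (∑ i, (e i : ℕ) * c i) *
        riemannTheta (fun i => (e i : ℕ)) 0 z ((2 : ℂ) • τ) ^ 2 := by
  rw [riemannTheta_mul_riemannTheta hτ]
  refine Finset.sum_congr rfl fun e _ => ?_
  have hsign : Complex.exp (π * I * ∑ i, (((e i : ℕ) : ℝ) * c i : ℂ)) =
      (-1) ^ (∑ i, (e i : ℕ) * c i) := by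
    rw [← exp_pi_mul_I, ← Complex.exp_int_mul]
    push_cast
    rw [mul_comm]
  have hshift := riemannTheta_add_two_mul_int (fun i => ((e i : ℕ) : ℝ)) 0 c z ((2 : ℂ) • τ)
  have hc : (fun i => (0 : ι → ℝ) i + 2 * (c i : ℝ)) =
      (fun i => (c i : ℝ)) + fun i => (c i : ℝ) := by
    ext i
    simp only [Pi.zero_apply, Pi.add_apply]
    ring
  rw [hsign, hc] at hshift
  simp [hshift, sq, mul_assoc]

end Genus

theorem riemannTheta_fin_two (a c : Fin 2 → ℝ) (z : Fin 2 → ℂ) (t11 t12 t22 : ℂ) :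
    riemannTheta a c z !![t11, t12; t12, t22] =
      theta2 (a 0) (a 1) (c 0) (c 1) (z 0) (z 1) t11 t12 t22 := by
  rw [riemannTheta, ← (finTwoArrowEquiv ℤ).symm.tsum_eq]
  refine tsum_congr fun m => ?_
  simp [thetaExp, dotProduct, mulVec, Fin.sum_univ_two, mul_comm t11, mul_comm t12, mul_comm t22]

theorem posDefIm_iff {t11 t12 t22 : ℂ} :
    posDefIm t11 t12 t22 ↔ (!![t11, t12; t12, t22].map im).PosDef := by
  rw [posDefIm]
  congr! 1
  ext i j
  fin_cases i <;> fin_cases j <;> rfl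

theorem theta2_duplication {t11 t12 t22 : ℂ} (hτ : posDefIm t11 t12 t22) (c d : ℤ) (z1 z2 : ℂ) :
    theta2 0 0 c d 0 0 t11 t12 t22 * theta2 0 0 c d z1 z2 t11 t12 t22 =
      theta2 0 0 0 0 z1 z2 (2 * t11) (2 * t12) (2 * t22) ^ 2
        + (-1) ^ (c + d) * theta2 1 1 0 0 z1 z2 (2 * t11) (2 * t12) (2 * t22) ^ 2
        + (-1) ^ c * theta2 1 0 0 0 z1 z2 (2 * t11) (2 * t12) (2 * t22) ^ 2
        + (-1) ^ d * theta2 0 1 0 0 z1 z2 (2 * t11) (2 * t12) (2 * t22) ^ 2 := by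
  have hgeneral := theta_duplication_diagonal_general (posDefIm_iff.1 hτ) ![c, d] ![z1, z2]
  have hdouble : (2 : ℂ) • !![t11, t12; t12, t22] =
      !![2 * t11, 2 * t12; 2 * t12, 2 * t22] := by
    simp
  rw [hdouble, ← (finTwoArrowEquiv (Fin 2)).symm.sum_comp, Fintype.sum_prod_type] at hgeneral
  simp only [riemannTheta_fin_two, Fin.sum_univ_two, finTwoArrowEquiv_symm_apply, cons_val_zero,
    cons_val_one, Pi.zero_apply, Fin.val_zero, Fin.val_one, Nat.cast_zero, Nat.cast_one, zero_mul,
    one_mul, add_zero, zero_add, zpow_zero] at hgeneral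
  rw [hgeneral]
  ring

/-- **Duplication (addition) theorem for second-order theta functions, diagonal cases.**
With `θ̂[ε](z) = θ[ε](z|2τ)`, the four identities relating `θ[00;··](0|τ)·θ[00;··](z|τ)`
to the squares `θ̂[00;00](z)², θ̂[11;00](z)², θ̂[10;00](z)², θ̂[01;00](z)²` hold. -/
theorem theta_duplication_diagonal (t11 t12 t22 : ℂ) (hτ : posDefIm t11 t12 t22)
    (z1 z2 : ℂ) :
    theta2 0 0 0 0 0 0 t11 t12 t22 * theta2 0 0 0 0 z1 z2 t11 t12 t22 =
        theta2 0 0 0 0 z1 z2 (2*t11) (2*t12) (2*t22) ^ 2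
          + theta2 1 1 0 0 z1 z2 (2*t11) (2*t12) (2*t22) ^ 2
          + theta2 1 0 0 0 z1 z2 (2*t11) (2*t12) (2*t22) ^ 2
          + theta2 0 1 0 0 z1 z2 (2*t11) (2*t12) (2*t22) ^ 2 ∧
      theta2 0 0 1 1 0 0 t11 t12 t22 * theta2 0 0 1 1 z1 z2 t11 t12 t22 =
        theta2 0 0 0 0 z1 z2 (2*t11) (2*t12) (2*t22) ^ 2
          + theta2 1 1 0 0 z1 z2 (2*t11) (2*t12) (2*t22) ^ 2
          - theta2 1 0 0 0 z1 z2 (2*t11) (2*t12) (2*t22) ^ 2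
          - theta2 0 1 0 0 z1 z2 (2*t11) (2*t12) (2*t22) ^ 2 ∧
      theta2 0 0 1 0 0 0 t11 t12 t22 * theta2 0 0 1 0 z1 z2 t11 t12 t22 =
        theta2 0 0 0 0 z1 z2 (2*t11) (2*t12) (2*t22) ^ 2
          - theta2 1 1 0 0 z1 z2 (2*t11) (2*t12) (2*t22) ^ 2
          - theta2 1 0 0 0 z1 z2 (2*t11) (2*t12) (2*t22) ^ 2
          + theta2 0 1 0 0 z1 z2 (2*t11) (2*t12) (2*t22) ^ 2 ∧
      theta2 0 0 0 1 0 0 t11 t12 t22 * theta2 0 0 0 1 z1 z2 t11 t12 t22 =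
        theta2 0 0 0 0 z1 z2 (2*t11) (2*t12) (2*t22) ^ 2
          - theta2 1 1 0 0 z1 z2 (2*t11) (2*t12) (2*t22) ^ 2
          + theta2 1 0 0 0 z1 z2 (2*t11) (2*t12) (2*t22) ^ 2
          - theta2 0 1 0 0 z1 z2 (2*t11) (2*t12) (2*t22) ^ 2 := by
  exact ⟨by simpa using theta2_duplication hτ 0 0 z1 z2,
    by simpa [← sub_eq_add_neg] using theta2_duplication hτ 1 1 z1 z2,
    by simpa [← sub_eq_add_neg] using theta2_duplication hτ 1 0 z1 z2,
    by simpa [← sub_eq_add_neg] using theta2_duplication hτ 0 1 z1 z2⟩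
end
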